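/- Let 𝒟 ⊆ (ℤ/3ℤ)^12 be the ternary code spanned by the six vectors (1,1,0,0,0,0,1,0,0,0,0,0), (1,2,0,0,0,0,0,1,0,0,0,0), (0,0,1,1,0,0,0,0,1,0,0,0), (0,0,1,2,0,0,0,0,0,1,0,0), (0,0,0,0,1,1,0,0,0,0,1,0), (0,0,0,0,1,2,0,0,0,0,0,1). Let h' be the linear automorphism of (ℤ/3ℤ)^12 defined by (h'x)_i = x_{i+6} for 1 ≤ i ≤ 6 and (h'x)_i = −x_{i−6} for 7 ≤ i ≤ 12. Then h'(𝒟) = 𝒟. -/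

import Mathlib

/-!
Write `x ∈ 𝔽₃¹²` as `(u, v)` with `u, v ∈ 𝔽₃⁶`. The generators of `𝒟` are the rows of `(A | 1)`,
where `A` consists of three diagonal blocks `T = !![1, 1; 1, 2]`, and `h'` is
`(u, v) ↦ (v, -u)`, i.e. right multiplication by the symplectic matrix `J = [0, -1; 1, 0]`.
Since `T² = 2 = -1` modulo 3, also `A² = -1`, and hence `(A | 1) J = (1 | -A) = -A (A | 1)`.
As `-A` is invertible, the rows of the two sides span the same code.
-/

open Matrix Submodule
open scoped Kronecker

section RowSpan

variable {R m n p : Type*} [Semiring R]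

theorem map_vecMulLinear_span_range_row [Fintype n] (G : Matrix m n R) (M : Matrix n p R) :
    map M.vecMulLinear (span R (Set.range G.row)) = span R (Set.range (G * M).row) := by
  rw [map_span, ← Set.range_comp]
  rfl

theorem span_range_row_mul_le [Fintype m] (B : Matrix p m R) (G : Matrix m n R) :
    span R (Set.range (B * G).row) ≤ span R (Set.range G.row) := by
  rw [← range_vecMulLinear G, span_le]
  rintro _ ⟨i, rfl⟩
  exact ⟨B.row i, rfl⟩

theorem span_range_row_mul_of_mul_eq_one [Fintype m] [DecidableEq m] {B C : Matrix m m R}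
    (hCB : C * B = 1) (G : Matrix m n R) :
    span R (Set.range (B * G).row) = span R (Set.range G.row) := by
  refine (span_range_row_mul_le B G).antisymm ?_
  simpa only [← Matrix.mul_assoc, hCB, Matrix.one_mul] using span_range_row_mul_le C (B * G)

end RowSpan

section SwapNeg

variable {R ι κ : Type*} [CommRing R] [DecidableEq ι]

theorem fromCols_one_mul_J [Fintype ι] {A : Matrix ι ι R} (hA : A * A = -1) :
    fromCols A (1 : Matrix ι ι R) * J ι R = -A * fromCols A 1 := by
  rw [J, fromCols_mul_fromBlocks, mul_fromCols]
  simp [hA]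

theorem eq_vecMulLinear_reindex_J [Fintype κ] (e : ι ⊕ ι ≃ κ) {f : (κ → R) →ₗ[R] (κ → R)}
    (hf_inl : ∀ x i, f x (e (.inl i)) = x (e (.inr i)))
    (hf_inr : ∀ x i, f x (e (.inr i)) = -x (e (.inl i))) :
    f = ((J ι R).reindex e e).vecMulLinear := by
  have : Fintype ι := .ofInjective (e ∘ .inl) (e.injective.comp Sum.inl_injective)
  refine LinearMap.ext fun x ↦ funext fun k ↦ ?_
  obtain ⟨i | i, rfl⟩ := e.surjective k <;>
    simp [hf_inl, hf_inr, submatrix_vecMul_equiv, J, vecMul_fromBlocks, vecMul_neg]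

theorem map_span_range_row_fromCols_one [Fintype ι] {A : Matrix ι ι R} (hA : A * A = -1)
    (e : ι ⊕ ι ≃ κ) {f : (κ → R) →ₗ[R] (κ → R)}
    (hf_inl : ∀ x i, f x (e (.inl i)) = x (e (.inr i)))
    (hf_inr : ∀ x i, f x (e (.inr i)) = -x (e (.inl i))) :
    map f (span R (Set.range ((fromCols A 1).reindex (.refl ι) e).row)) =
      span R (Set.range ((fromCols A 1).reindex (.refl ι) e).row) := by
  have : Fintype κ := .ofEquiv _ e
  have hmul : (fromCols A 1).reindex (.refl ι) e * (J ι R).reindex e e =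
      -A * (fromCols A 1).reindex (.refl ι) e := by
    rw [reindex_apply, reindex_apply, submatrix_mul_equiv, fromCols_one_mul_J hA]
    rfl
  have hinv : A * -A = 1 := by rw [Matrix.mul_neg, hA, neg_neg]
  rw [eq_vecMulLinear_reindex_J e hf_inl hf_inr, map_vecMulLinear_span_range_row, hmul,
    span_range_row_mul_of_mul_eq_one hinv]

end SwapNeg

section GlueCode

/-- The non-identity part `T` of the generator matrix `(T | 1)` of the ternary tetracode. -/
def tetracodeMatrix : Matrix (Fin 2) (Fin 2) (ZMod 3) :=
  !![1, 1; 1, 2]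

/-- The matrix `A` such that `(A | 1)` generates the glue code `𝒟`: the block-diagonal sum of three
copies of `tetracodeMatrix`. The index `(k, j)` is the `j`-th row or column of the `k`-th block. -/
def glueMatrix : Matrix (Fin 3 × Fin 2) (Fin 3 × Fin 2) (ZMod 3) :=
  1 ⊗ₖ tetracodeMatrix

/-- The numbering of the twelve coordinates of `𝒟`: the columns of `A` come first, then those of
`1`, each half being ordered block by block. -/
def glueCoordEquiv : (Fin 3 × Fin 2) ⊕ (Fin 3 × Fin 2) ≃ Fin 12 :=
  (finProdFinEquiv.sumCongr finProdFinEquiv).trans finSumFinEquiv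

theorem tetracodeMatrix_mul_self : tetracodeMatrix * tetracodeMatrix = -1 := by
  decide

theorem glueMatrix_mul_self : glueMatrix * glueMatrix = -1 := by
  rw [glueMatrix, ← mul_kronecker_mul, tetracodeMatrix_mul_self, Matrix.one_mul,
    ← neg_one_smul (ZMod 3) (1 : Matrix (Fin 2) (Fin 2) (ZMod 3)), kronecker_smul,
    one_kronecker_one, neg_one_smul]

theorem range_row_reindex_fromCols_glueMatrix :
    Set.range ((fromCols glueMatrix 1).reindex (.refl _) glueCoordEquiv).row =
      {![1,1,0,0,0,0,1,0,0,0,0,0],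
        ![1,2,0,0,0,0,0,1,0,0,0,0],
        ![0,0,1,1,0,0,0,0,1,0,0,0],
        ![0,0,1,2,0,0,0,0,0,1,0,0],
        ![0,0,0,0,1,1,0,0,0,0,1,0],
        ![0,0,0,0,1,2,0,0,0,0,0,1]} := by
  have hrow : ((fromCols glueMatrix 1).reindex (.refl _) glueCoordEquiv).row =
      ![![1,1,0,0,0,0,1,0,0,0,0,0],
        ![1,2,0,0,0,0,0,1,0,0,0,0],
        ![0,0,1,1,0,0,0,0,1,0,0,0],
        ![0,0,1,2,0,0,0,0,0,1,0,0],
        ![0,0,0,0,1,1,0,0,0,0,1,0],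
        ![0,0,0,0,1,2,0,0,0,0,0,1]] ∘ finProdFinEquiv := by
    decide
  rw [hrow, EquivLike.range_comp]
  simp only [Matrix.range_cons, Matrix.range_empty, Set.union_empty, Set.singleton_union]

theorem val_glueCoordEquiv_inl_lt (i : Fin 3 × Fin 2) :
    (glueCoordEquiv (.inl i) : ℕ) < 6 := by
  revert i; decide

theorem not_val_glueCoordEquiv_inr_lt (i : Fin 3 × Fin 2) :
    ¬ (glueCoordEquiv (.inr i) : ℕ) < 6 := by
  revert i; decide

theorem glueCoordEquiv_inl_add_six (i : Fin 3 × Fin 2) :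
    glueCoordEquiv (.inl i) + 6 = glueCoordEquiv (.inr i) := by
  revert i; decide

end GlueCode

/-- The ternary glue code `𝒟 ⊆ 𝔽₃¹²` spanned by the six listed generators is invariant
under the linear automorphism `h'` which sends `(h'x)ᵢ = x_{i+6}` for the first six
coordinates and `(h'x)ᵢ = -x_{i-6}` for the last six. -/
theorem stmt6
    (h' : (Fin 12 → ZMod 3) →ₗ[ZMod 3] (Fin 12 → ZMod 3))
    (hh' : ∀ (x : Fin 12 → ZMod 3) (i : Fin 12),
      h' x i = if (i : ℕ) < 6 then x (i + 6) else - x (i - 6)) :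
    Submodule.map h' (Submodule.span (ZMod 3)
      ({![1,1,0,0,0,0,1,0,0,0,0,0],
        ![1,2,0,0,0,0,0,1,0,0,0,0],
        ![0,0,1,1,0,0,0,0,1,0,0,0],
        ![0,0,1,2,0,0,0,0,0,1,0,0],
        ![0,0,0,0,1,1,0,0,0,0,1,0],
        ![0,0,0,0,1,2,0,0,0,0,0,1]} : Set (Fin 12 → ZMod 3))) =
    Submodule.span (ZMod 3)
      ({![1,1,0,0,0,0,1,0,0,0,0,0],
        ![1,2,0,0,0,0,0,1,0,0,0,0],
        ![0,0,1,1,0,0,0,0,1,0,0,0],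
        ![0,0,1,2,0,0,0,0,0,1,0,0],
        ![0,0,0,0,1,1,0,0,0,0,1,0],
        ![0,0,0,0,1,2,0,0,0,0,0,1]} : Set (Fin 12 → ZMod 3)) := by
  rw [← range_row_reindex_fromCols_glueMatrix]
  refine map_span_range_row_fromCols_one glueMatrix_mul_self glueCoordEquiv
    (fun x i ↦ ?_) (fun x i ↦ ?_)
  · rw [hh', if_pos (val_glueCoordEquiv_inl_lt i), glueCoordEquiv_inl_add_six]
  · rw [hh', if_neg (not_val_glueCoordEquiv_inr_lt i), ← glueCoordEquiv_inl_add_six,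
      add_sub_cancel_right]
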